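/- For all integers n ≥ 0 and all natural numbers i, j, the number of pairs (c, E), where c : Fin n → Bool is a choice with exactly i indices k satisfying c k = false and E is a noncrossing contraction with exactly j edges of the word of (a + (a†)²)^n associated to c, equals the number of L-lattice paths in P_n with exactly j occurrences of the consecutive step triple H,D,D and exactly i occurrences of the consecutive step pair H,D. -/

import Mathlib

/-- Two edges `(i,j)` and `(p,q)` cross if `i < p < j < q` or `p < i < q < j`. -/
def Crosses {N : ℕ} (e f : Fin N × Fin N) : Prop :=
  (e.1 < f.1 ∧ f.1 < e.2 ∧ e.2 < f.2) ∨ (f.1 < e.1 ∧ e.1 < f.2 ∧ f.2 < e.2)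

/-- A contraction of the word `w`: a set of edges `(i,j)` with `i < j`, `w i = false` (an `a`),
`w j = true` (an `a†`), whose endpoints are pairwise distinct. -/
def IsContraction {N : ℕ} (w : Fin N → Bool) (E : Finset (Fin N × Fin N)) : Prop :=
  (∀ e ∈ E, e.1 < e.2 ∧ w e.1 = false ∧ w e.2 = true) ∧
  (∀ e ∈ E, ∀ f ∈ E, e ≠ f → e.1 ≠ f.1 ∧ e.1 ≠ f.2 ∧ e.2 ≠ f.1 ∧ e.2 ≠ f.2)

/-- A set of edges is noncrossing if no two of its edges cross. -/
def IsNoncrossing {N : ℕ} (E : Finset (Fin N × Fin N)) : Prop :=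
  ∀ e ∈ E, ∀ f ∈ E, ¬ Crosses e f

/-- The number of noncrossing contractions of `w` with exactly `m` edges. -/
noncomputable def ncCount {N : ℕ} (w : Fin N → Bool) (m : ℕ) : ℕ :=
  Nat.card {E : Finset (Fin N × Fin N) //
    IsContraction w E ∧ IsNoncrossing E ∧ E.card = m}

/-- The word of `(a + (a†)^s)^n` associated to a choice `c : Fin n → Bool`: block `k` consists of
the single letter `a` (`false`) if `c k = false`, and of `s` copies of `a†` (`true`) otherwise. -/
def wordChoiceAS (s : ℕ) {n : ℕ} (c : Fin n → Bool) : List Bool :=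
  (List.ofFn c).flatMap (fun b => if b then List.replicate s true else [false])

/-- The number of pairs `(c, E)` where `c` is a choice for `(a + (a†)^s)^n` with exactly `i`
indices `k` satisfying `c k = false`, and `E` is a noncrossing contraction of the associated
word with exactly `j` edges. -/
noncomputable def pairCountAS (s n j i : ℕ) : ℕ :=
  Nat.card {p : Σ c : Fin n → Bool,
      Finset (Fin (wordChoiceAS s c).length × Fin (wordChoiceAS s c).length) //
    (Finset.univ.filter (fun k => p.1 k = false)).card = i ∧
    IsContraction (wordChoiceAS s p.1).get p.2 ∧ IsNoncrossing p.2 ∧ p.2.card = j}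

/-- Steps of an L-lattice path. -/
inductive LStep : Type
  | H : LStep
  | D : LStep
  | L : LStep
deriving DecidableEq

/-- The move of a step: `H = (2,1)`, `D = (1,-1)`, `L = (1,2)`. -/
def LStep.move : LStep → ℤ × ℤ
  | .H => (2, 1)
  | .D => (1, -1)
  | .L => (1, 2)

/-- `p ∈ P_n`: an L-lattice path from `(0,0)` to `(3n,0)` which never goes below the `x`-axis
and has no three consecutive `D` steps. -/
def InPn (n : ℕ) (p : List LStep) : Prop :=
  (p.map LStep.move).sum = ((3 * n : ℤ), (0 : ℤ)) ∧
  (∀ q : List LStep, q <+: p → 0 ≤ ((q.map LStep.move).sum).2) ∧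
  ¬ ([LStep.D, LStep.D, LStep.D] <:+: p)

/-- The number of occurrences of the consecutive step pattern `pat` in the path `p`. -/
def occCount (pat p : List LStep) : ℕ :=
  ((List.range p.length).filter (fun k => (p.drop k).take pat.length = pat)).length

/-!
In a noncrossing contraction, scanned from left to right, every matched `a†` is joined to the most
recent matched `a` that is still waiting for its partner. Hence the contraction is determined by the
set of matched letters, and a set of letters arises in this way exactly if, reading the word from
right to left with `+1` at its `a†`'s and `-1` at its `a`'s, one obtains a walk that stays
nonnegative and returns to `0`.

Read from right to left, replace a block `a` by `HDD` or `HD`, according to whether it is matched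
or not, and a block `(a†)²` by `LDD`, `H`, `LD` or `L`, according to which of its letters are
matched. Each piece gains the height of its block, and the two coordinates of its displacement add
up to `3`, so `n` blocks that form an excursion give a path from `(0,0)` to `(3n,0)`. The path stays
nonnegative because every descent within it comes at the end of a piece. Conversely, a path without
`DDD` and without an initial `D` is cut uniquely into such pieces before each `H` and `L`. The
pattern `HD` marks the blocks `a`, and `HDD` those that are matched, one for each edge.
-/

theorem card_eq_of_existsUnique {α β : Type*} (r : α → β → Prop) (hα : ∀ a, ∃! b, r a b)
    (hβ : ∀ b, ∃! a, r a b) : Nat.card α = Nat.card β := by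
  choose f hf hf_unique using hα
  refine Nat.card_eq_of_bijective f ((Function.bijective_iff_existsUnique f).2 fun b => ?_)
  obtain ⟨a, ha, ha_unique⟩ := hβ b
  exact ⟨a, (hf_unique a b ha).symm, fun a' h => ha_unique a' (h ▸ hf a')⟩

theorem flatMap_injective_of_suffix_free {α β : Type*} {f : α → List β} (hne : ∀ a, f a ≠ [])
    (hf : ∀ a b, f a <:+ f b → a = b) : Function.Injective fun l : List α => l.flatMap f := by
  intro l l' h
  induction l using List.reverseRecOn generalizing l' with
  | nil => exact (List.eq_nil_iff_forall_not_mem.2 fun b hb =>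
      hne b (List.flatMap_eq_nil_iff.1 h.symm b hb)).symm
  | append_singleton l a ih =>
    obtain rfl | ⟨l', b, rfl⟩ := List.eq_nil_or_concat' l'
    · simp [hne] at h
    · simp only [List.flatMap_append, List.flatMap_singleton] at h
      have ha : f a <:+ l'.flatMap f ++ f b := h ▸ List.suffix_append ..
      obtain rfl : a = b :=
        (List.suffix_or_suffix_of_suffix ha (List.suffix_append ..)).elim (hf a b)
          fun hba => (hf b a hba).symm
      rw [ih (List.append_cancel_right h)]

theorem exists_flatMap_eq_of_map_eq_flatMap {α β γ δ : Type*} {f : γ → δ} {word : β → List δ}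
    {key : α → β} {code : α → List γ}
    (h : ∀ b y, y.map f = word b → ∃ a, key a = b ∧ code a = y) {x : List γ} {c : List β}
    (hx : x.map f = c.flatMap word) : ∃ l : List α, l.map key = c ∧ l.flatMap code = x := by
  induction c generalizing x with
  | nil => exact ⟨[], rfl, (List.map_eq_nil_iff.1 hx).symm⟩
  | cons b c ih =>
    obtain ⟨y, z, rfl, hy, hz⟩ := List.map_eq_append_iff.1 hx
    obtain ⟨a, rfl, rfl⟩ := h b y hy
    obtain ⟨l, rfl, rfl⟩ := ih hz
    exact ⟨a :: l, rfl, rfl⟩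

theorem count_ofFn {α : Type*} [DecidableEq α] {n : ℕ} (c : Fin n → α) (a : α) :
    (List.ofFn c).count a = (Finset.univ.filter fun k => c k = a).card := by
  rw [← Multiset.coe_count, ← Fin.univ_val_map, Multiset.count_map]
  simp [Finset.card, eq_comm]

theorem getElem?_concat_eq_some {α : Type*} {w : List α} {a b : α} {k : ℕ} :
    (w ++ [a])[k]? = some b ↔ w[k]? = some b ∨ k = w.length ∧ a = b := by
  grind

theorem occCount_cons (pat : List LStep) (a : LStep) (p : List LStep) :
    occCount pat (a :: p) = (if pat <+: a :: p then 1 else 0) + occCount pat p := by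
  have occurs_iff : pat <+: a :: p ↔ (a :: p).take pat.length = pat := by
    rw [List.prefix_iff_eq_take, eq_comm]
  simp only [occurs_iff, occCount, List.length_cons, List.range_succ_eq_map, List.filter_cons,
    List.filter_map, Function.comp_def, List.drop_succ_cons, List.drop_zero]
  split_ifs <;> simp_all [add_comm]

theorem insert_pair_inj {α β : Type*} [DecidableEq α] [DecidableEq β] {E F : Finset (α × β)}
    {a a' : α} {b : β} (hE : ∀ x, (x, b) ∉ E) (hF : ∀ x, (x, b) ∉ F)
    (h : insert (a, b) E = insert (a', b) F) : a = a' ∧ E = F := by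
  have ha : (a, b) ∈ insert (a', b) F := h ▸ Finset.mem_insert_self ..
  obtain rfl : a = a' := by simpa [hF] using ha
  exact ⟨rfl, by rw [← Finset.erase_insert (hE a), h, Finset.erase_insert (hF a)]⟩

/-- The walk started at height `h` whose steps are the `f`-values of the entries of `l` stays
nonnegative and ends at height `0`. -/
def IsExcursion {α : Type*} (f : α → ℤ) (h : ℤ) (l : List α) : Prop :=
  (∀ q, q <+: l → 0 ≤ h + (q.map f).sum) ∧ h + (l.map f).sum = 0

section Excursion

variable {α : Type*} {f : α → ℤ} {h : ℤ} {l : List α}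

theorem IsExcursion.nonneg (hl : IsExcursion f h l) : 0 ≤ h := by
  simpa using hl.1 [] List.nil_prefix

@[simp]
theorem isExcursion_nil : IsExcursion f h [] ↔ h = 0 := by
  simp +contextual [IsExcursion]

theorem isExcursion_cons {a : α} :
    IsExcursion f h (a :: l) ↔ 0 ≤ h ∧ IsExcursion f (h + f a) l := by
  have forall_prefix (P : List α → Prop) :
      (∀ q, q <+: a :: l → P q) ↔ P [] ∧ ∀ q, q <+: l → P (a :: q) := by
    simp only [List.prefix_cons_iff]
    grind
  simp [IsExcursion, forall_prefix, add_assoc, and_assoc]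

end Excursion

/-- A noncrossing contraction `E` of the word `w`, together with a stack `P` (top first) of
pending white positions, those reserved for edges to letters yet to be added at the right end of
`w`: no edge of `E` ends at or passes over a pending position. -/
structure PartialContraction (w : List Bool) (E : Finset (ℕ × ℕ)) (P : List ℕ) : Prop where
  edge : ∀ e ∈ E, e.1 < e.2 ∧ w[e.1]? = some false ∧ w[e.2]? = some true
  fst_inj : ∀ e ∈ E, ∀ f ∈ E, e.1 = f.1 → e = f
  snd_inj : ∀ e ∈ E, ∀ f ∈ E, e.2 = f.2 → e = f
  noncrossing : ∀ e ∈ E, ∀ f ∈ E, ¬ (e.1 < f.1 ∧ f.1 < e.2 ∧ e.2 < f.2)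
  pending : ∀ p ∈ P, w[p]? = some false
  pending_exposed : ∀ p ∈ P, ∀ e ∈ E, e.1 ≠ p ∧ ¬ (e.1 < p ∧ p < e.2)
  pending_sorted : P.Pairwise (· > ·)

namespace PartialContraction

variable {w : List Bool} {E : Finset (ℕ × ℕ)} {P : List ℕ} {p : ℕ}

theorem fst_lt_length (h : PartialContraction w E P) {e : ℕ × ℕ} (he : e ∈ E) :
    e.1 < w.length :=
  (List.getElem?_eq_some_iff.1 (h.edge e he).2.1).1

theorem snd_lt_length (h : PartialContraction w E P) {e : ℕ × ℕ} (he : e ∈ E) :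
    e.2 < w.length :=
  (List.getElem?_eq_some_iff.1 (h.edge e he).2.2).1

theorem pending_lt_length (h : PartialContraction w E P) (hp : p ∈ P) : p < w.length :=
  (List.getElem?_eq_some_iff.1 (h.pending p hp)).1

theorem concat (h : PartialContraction w E P) (b : Bool) : PartialContraction (w ++ [b]) E P where
  edge e he := by
    obtain ⟨hlt, h₁, h₂⟩ := h.edge e he
    exact ⟨hlt, getElem?_concat_eq_some.2 (.inl h₁), getElem?_concat_eq_some.2 (.inl h₂)⟩
  fst_inj := h.fst_inj
  snd_inj := h.snd_inj
  noncrossing := h.noncrossing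
  pending p hp := getElem?_concat_eq_some.2 (.inl (h.pending p hp))
  pending_exposed := h.pending_exposed
  pending_sorted := h.pending_sorted

theorem push (h : PartialContraction w E P) :
    PartialContraction (w ++ [false]) E (w.length :: P) where
  edge := (h.concat false).edge
  fst_inj := h.fst_inj
  snd_inj := h.snd_inj
  noncrossing := h.noncrossing
  pending := List.forall_mem_cons.2 ⟨by simp, (h.concat false).pending⟩
  pending_exposed := List.forall_mem_cons.2
    ⟨fun _ he => ⟨(h.fst_lt_length he).ne, fun hlt => lt_asymm hlt.2 (h.snd_lt_length he)⟩,
      h.pending_exposed⟩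
  pending_sorted := List.pairwise_cons.2 ⟨fun _ => h.pending_lt_length, h.pending_sorted⟩

theorem pop (h : PartialContraction w E (p :: P)) :
    PartialContraction (w ++ [true]) (insert (p, w.length) E) P := by
  obtain ⟨p_gt, sorted⟩ := List.pairwise_cons.1 h.pending_sorted
  have p_lt : p < w.length := h.pending_lt_length List.mem_cons_self
  have p_exposed := h.pending_exposed p List.mem_cons_self
  have snd_lt {e} (he : e ∈ E) := h.snd_lt_length he
  constructor
  · exact (Finset.forall_mem_insert ..).2
      ⟨⟨p_lt, (h.concat true).pending p List.mem_cons_self, List.getElem?_concat_length⟩,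
        (h.concat true).edge⟩
  · have := h.fst_inj
    grind
  · have := h.snd_inj
    grind
  · have := h.noncrossing
    grind
  · exact fun r hr => (h.concat true).pending r (List.mem_cons_of_mem p hr)
  · have := h.pending_exposed
    grind
  · exact sorted

theorem mono {E' : Finset (ℕ × ℕ)} {P' : List ℕ} (h : PartialContraction w E P) (hE : E' ⊆ E)
    (hP : P'.Sublist P) : PartialContraction w E' P' where
  edge e he := h.edge e (hE he)
  fst_inj e he f hf := h.fst_inj e (hE he) f (hE hf)
  snd_inj e he f hf := h.snd_inj e (hE he) f (hE hf)
  noncrossing e he f hf := h.noncrossing e (hE he) f (hE hf)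
  pending p hp := h.pending p (hP.subset hp)
  pending_exposed p hp e he := h.pending_exposed p (hP.subset hp) e (hE he)
  pending_sorted := h.pending_sorted.sublist hP

theorem of_concat {b : Bool} (h : PartialContraction (w ++ [b]) E P)
    (hE : ∀ e ∈ E, e.2 ≠ w.length) (hP : w.length ∉ P) : PartialContraction w E P where
  edge e he := by
    have := h.edge e he
    have := hE e he
    grind [getElem?_concat_eq_some]
  fst_inj := h.fst_inj
  snd_inj := h.snd_inj
  noncrossing := h.noncrossing
  pending p hp := by
    have := h.pending p hp
    grind [getElem?_concat_eq_some]
  pending_exposed := h.pending_exposed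
  pending_sorted := h.pending_sorted

theorem of_concat_false (h : PartialContraction (w ++ [false]) E P) :
    PartialContraction w E P ∨ ∃ P', P = w.length :: P' ∧ PartialContraction w E P' := by
  have snd_ne : ∀ e ∈ E, e.2 ≠ w.length := fun e he heq => by
    simpa [heq] using (h.edge e he).2.2
  by_cases hP : w.length ∈ P
  · right
    obtain _ | ⟨q, P⟩ := P
    · cases hP
    have lt_q : ∀ r ∈ P, r < q := (List.pairwise_cons.1 h.pending_sorted).1
    have q_lt : q < w.length + 1 := by simpa using h.pending_lt_length List.mem_cons_self
    obtain rfl : q = w.length := by grind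
    exact ⟨P, rfl, (h.mono subset_rfl (List.sublist_cons_self ..)).of_concat snd_ne
      fun hmem => (lt_q _ hmem).false⟩
  · exact .inl (h.of_concat snd_ne hP)

theorem of_pop (h : PartialContraction (w ++ [true]) E P) (he : (p, w.length) ∈ E) :
    PartialContraction w (E.erase (p, w.length)) (p :: P) := by
  have snd_ne : ∀ f ∈ E.erase (p, w.length), f.2 ≠ w.length := fun f hf hf₂ =>
    Finset.ne_of_mem_erase hf (h.snd_inj f (Finset.mem_of_mem_erase hf) _ he hf₂)
  have fst_ne : ∀ f ∈ E.erase (p, w.length), f.1 ≠ p := fun f hf hf₁ =>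
    Finset.ne_of_mem_erase hf (h.fst_inj f (Finset.mem_of_mem_erase hf) _ he hf₁)
  have p_exposed : ∀ f ∈ E.erase (p, w.length), f.1 ≠ p ∧ ¬ (f.1 < p ∧ p < f.2) := by
    intro f hf
    have hfE := Finset.mem_of_mem_erase hf
    have hf_lt : f.2 < w.length := by
      have := h.snd_lt_length hfE
      have := snd_ne f hf
      grind
    exact ⟨fst_ne f hf, fun hlt => h.noncrossing f hfE _ he ⟨hlt.1, hlt.2, hf_lt⟩⟩
  have lt_p : ∀ r ∈ P, r < p := by
    intro r hr
    have := h.pending_exposed r hr _ he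
    have := h.pending r hr
    grind [getElem?_concat_eq_some]
  have h_erase := h.mono (Finset.erase_subset (p, w.length) E) (List.Sublist.refl P)
  have h_cons : PartialContraction (w ++ [true]) (E.erase (p, w.length)) (p :: P) :=
    { h_erase with
      pending := List.forall_mem_cons.2 ⟨(h.edge _ he).2.1, h.pending⟩
      pending_exposed := List.forall_mem_cons.2 ⟨p_exposed, h_erase.pending_exposed⟩
      pending_sorted := List.pairwise_cons.2 ⟨lt_p, h.pending_sorted⟩ }
  refine h_cons.of_concat snd_ne fun hmem => ?_
  simpa using h_cons.pending _ hmem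

theorem of_concat_true (h : PartialContraction (w ++ [true]) E P) :
    PartialContraction w E P ∨
      ∃ p, (p, w.length) ∈ E ∧ PartialContraction w (E.erase (p, w.length)) (p :: P) := by
  by_cases hE : ∃ p, (p, w.length) ∈ E
  · obtain ⟨p, hp⟩ := hE
    exact .inr ⟨p, hp, h.of_pop hp⟩
  · refine .inl (h.of_concat (fun e he heq => hE ⟨e.1, heq ▸ he⟩) fun hmem => ?_)
    simpa using h.pending _ hmem

end PartialContraction

/-- A letter (first component) with a mark (second component) that is `true` if the letter is
matched or pending. -/
abbrev MarkedLetter : Type := Bool × Bool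

/-- The change in the number of open edges at a marked letter when the word is read from right to
left: a marked `a†` opens an edge, a marked `a` closes one. -/
def MarkedLetter.rise : MarkedLetter → ℤ
  | (_, false) => 0
  | (false, true) => -1
  | (true, true) => 1

/-- `StackMatching x E P`: scanning the marked word `x`, pushing the marked white letters on a stack
and joining each marked black letter to the top of the stack yields the edges `E` and leaves the
stack `P`. The list `x` holds the word reversed, so its head is the last letter scanned and the
position of a letter in the word is the length of the tail behind it in `x`. -/
inductive StackMatching : List MarkedLetter → Finset (ℕ × ℕ) → List ℕ → Prop
  | nil : StackMatching [] ∅ []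
  | skip {x E P} (b : Bool) : StackMatching x E P → StackMatching ((b, false) :: x) E P
  | push {x E P} : StackMatching x E P → StackMatching ((false, true) :: x) E (x.length :: P)
  | pop {x E P p} : StackMatching x E (p :: P) →
      StackMatching ((true, true) :: x) (insert (p, x.length) E) P

namespace StackMatching

variable {x y : List MarkedLetter} {E E' : Finset (ℕ × ℕ)} {P P' : List ℕ}

theorem partialContraction (h : StackMatching x E P) :
    PartialContraction (x.map Prod.fst).reverse E P := by
  induction h with
  | nil => constructor <;> simp
  | skip b _ ih => simpa using ih.concat b
  | push _ ih => simpa using ih.push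
  | pop _ ih => simpa using ih.pop

theorem snd_lt_length (h : StackMatching x E P) {e : ℕ × ℕ} (he : e ∈ E) : e.2 < x.length := by
  simpa using h.partialContraction.snd_lt_length he

theorem pending_lt_length (h : StackMatching x E P) {p : ℕ} (hp : p ∈ P) : p < x.length := by
  simpa using h.partialContraction.pending_lt_length hp

theorem notMem_edges (h : StackMatching x E P) (p : ℕ) : (p, x.length) ∉ E :=
  fun hp => (h.snd_lt_length hp).false

theorem length_notMem_pending (h : StackMatching x E P) : x.length ∉ P :=
  fun hp => (h.pending_lt_length hp).false

theorem card_add_length (h : StackMatching x E P) :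
    E.card + P.length = x.count (false, true) := by
  induction h with
  | nil => rfl
  | skip b _ ih => simpa using ih
  | push _ ih => simp [← ih, add_assoc]
  | pop h ih =>
    rw [Finset.card_insert_of_notMem (h.notMem_edges _)]
    simpa [add_assoc, add_comm 1] using ih

theorem isExcursion (h : StackMatching x E P) : IsExcursion MarkedLetter.rise P.length x := by
  induction h with
  | nil => simp
  | skip b _ ih => simpa [isExcursion_cons, MarkedLetter.rise] using ih
  | push _ ih => simpa [isExcursion_cons, MarkedLetter.rise, ih] using by positivity
  | pop _ ih => simpa [isExcursion_cons, MarkedLetter.rise] using ih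

theorem right_unique (h : StackMatching x E P) (h' : StackMatching x E' P') :
    E = E' ∧ P = P' := by
  induction h generalizing E' P' with
  | nil => cases h'; exact ⟨rfl, rfl⟩
  | skip b _ ih =>
    cases h' with
    | skip _ h' => exact ih h'
  | push _ ih =>
    cases h' with
    | push h' => grind
  | pop _ ih =>
    cases h' with
    | pop h' => grind

theorem left_unique (h : StackMatching x E P) (h' : StackMatching y E P)
    (hw : x.map Prod.fst = y.map Prod.fst) : x = y := by
  induction h generalizing y with
  | nil => exact (List.map_eq_nil_iff.1 hw.symm).symm
  | skip b hx ih =>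
    have := hx.notMem_edges
    have := hx.length_notMem_pending
    have := congrArg List.length hw
    cases h' <;> grind
  | @push x E P hx ih =>
    have hlen := congrArg List.length hw
    generalize hP : x.length :: P = Q at h'
    cases h' with
    | skip b hy =>
      have := hy.length_notMem_pending
      grind
    | _ => grind
  | @pop x E P p hx ih =>
    have hlen := congrArg List.length hw
    generalize hE : insert (p, x.length) E = F at h'
    cases h' with
    | skip b hy =>
      have := hy.notMem_edges
      grind
    | @pop y _ _ q hy =>
      have hlen : x.length = y.length := by grind
      rw [hlen] at hE
      obtain ⟨rfl, rfl⟩ := insert_pair_inj (hlen ▸ hx.notMem_edges) hy.notMem_edges hE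
      grind
    | _ => grind

end StackMatching

theorem PartialContraction.exists_stackMatching {w : List Bool} {E : Finset (ℕ × ℕ)} {P : List ℕ}
    (h : PartialContraction w.reverse E P) :
    ∃ x : List MarkedLetter, x.map Prod.fst = w ∧ StackMatching x E P := by
  induction w generalizing E P with
  | nil =>
    have hE : E = ∅ := Finset.eq_empty_of_forall_notMem fun e he => by
      simpa using h.snd_lt_length he
    have hP : P = [] := List.eq_nil_iff_forall_not_mem.2 fun p hp => by
      simpa using h.pending_lt_length hp
    exact ⟨[], rfl, by rw [hE, hP]; exact .nil⟩
  | cons b w ih =>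
    rw [List.reverse_cons] at h
    cases b
    · obtain h' | ⟨P, rfl, h'⟩ := h.of_concat_false <;> obtain ⟨x, rfl, hx⟩ := ih h'
      · exact ⟨(false, false) :: x, rfl, hx.skip false⟩
      · exact ⟨(false, true) :: x, rfl, by simpa using hx.push⟩
    · obtain h' | ⟨p, hp, h'⟩ := h.of_concat_true <;> obtain ⟨x, rfl, hx⟩ := ih h'
      · exact ⟨(true, false) :: x, rfl, hx.skip true⟩
      · refine ⟨(true, true) :: x, rfl, ?_⟩
        rw [← Finset.insert_erase hp]
        simpa using hx.pop

theorem IsExcursion.exists_stackMatching {x : List MarkedLetter} {h : ℤ}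
    (hx : IsExcursion MarkedLetter.rise h x) :
    ∃ E P, StackMatching x E P ∧ P.length = h := by
  induction x generalizing h with
  | nil => exact ⟨∅, [], .nil, by simp_all⟩
  | cons a x ih =>
    obtain ⟨h_nonneg, hx⟩ := isExcursion_cons.1 hx
    obtain ⟨E, P, hEP, hP⟩ := ih hx
    obtain ⟨b, _ | _⟩ := a
    · exact ⟨E, P, hEP.skip b, by simpa [MarkedLetter.rise] using hP⟩
    · cases b
      · exact ⟨E, x.length :: P, hEP.push, by simp [hP, MarkedLetter.rise]⟩
      · obtain _ | ⟨p, P⟩ := P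
        · simp only [List.length_nil, MarkedLetter.rise] at hP
          omega
        · exact ⟨_, P, hEP.pop, by simpa [MarkedLetter.rise] using hP⟩

/-- Edges between positions of a word of length `N`, seen as pairs of natural numbers so that edge
sets of words of different lengths can be compared. -/
def edgeEmbedding (N : ℕ) : Fin N × Fin N ↪ ℕ × ℕ :=
  Fin.valEmbedding.prodMap Fin.valEmbedding

theorem exists_map_edgeEmbedding_eq {N : ℕ} {E : Finset (ℕ × ℕ)}
    (hE : ∀ e ∈ E, e.1 < N ∧ e.2 < N) :
    ∃ F : Finset (Fin N × Fin N), F.map (edgeEmbedding N) = E := by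
  obtain ⟨F, -, rfl⟩ : ∃ F ⊆ (Finset.univ : Finset (Fin N × Fin N)), E = F.map (edgeEmbedding N) :=
    Finset.subset_map_iff.1 fun e he => Finset.mem_map.2
      ⟨(⟨e.1, (hE e he).1⟩, ⟨e.2, (hE e he).2⟩), Finset.mem_univ _, rfl⟩
  exact ⟨F, rfl⟩

theorem partialContraction_map_edgeEmbedding {w : List Bool}
    {E : Finset (Fin w.length × Fin w.length)} :
    PartialContraction w (E.map (edgeEmbedding w.length)) [] ↔
      IsContraction w.get E ∧ IsNoncrossing E := by
  have forall_map {q : ℕ × ℕ → Prop} :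
      (∀ e ∈ E.map (edgeEmbedding w.length), q e) ↔ ∀ e ∈ E, q (e.1, e.2) :=
    Finset.forall_mem_map
  have getElem?_eq_some (k : Fin w.length) (b : Bool) : w[(k : ℕ)]? = some b ↔ w.get k = b := by
    simp
  constructor
  · rintro ⟨edge, fst_inj, snd_inj, noncrossing, -⟩
    simp only [forall_map, getElem?_eq_some, Prod.mk.injEq, Fin.val_inj, ← Prod.ext_iff]
      at edge fst_inj snd_inj noncrossing
    have fst_ne_snd : ∀ e ∈ E, ∀ f ∈ E, e.1 ≠ f.2 := fun e he f hf hef =>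
      Bool.false_ne_true (((edge e he).2.1.symm.trans (congrArg w.get hef)).trans (edge f hf).2.2)
    exact ⟨⟨edge, fun e he f hf hne => ⟨fun h => hne (fst_inj e he f hf h), fst_ne_snd e he f hf,
        fun h => fst_ne_snd f hf e he h.symm, fun h => hne (snd_inj e he f hf h)⟩⟩,
      fun e he f hf h => h.elim (noncrossing e he f hf) (noncrossing f hf e he)⟩
  · rintro ⟨⟨edge, disjoint⟩, noncrossing⟩
    constructor
    case pending | pending_exposed | pending_sorted => simp
    all_goals simp only [forall_map, getElem?_eq_some, Prod.mk.injEq, Fin.val_inj, ← Prod.ext_iff]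
    · exact edge
    · exact fun e he f hf h => by_contra fun hne => (disjoint e he f hf hne).1 h
    · exact fun e he f hf h => by_contra fun hne => (disjoint e he f hf hne).2.2.2 h
    · exact fun e he f hf h => noncrossing e he f hf (.inl h)

/-- A block of `(a + (a†)²)^n` with marked letters; `black m₁ m₂` lists its marks from right to
left. -/
inductive MarkedBlock : Type
  | white (m : Bool) : MarkedBlock
  | black (m₁ m₂ : Bool) : MarkedBlock

namespace MarkedBlock

/-- The value of the choice at a block: `true` for `(a†)²`. -/
def color : MarkedBlock → Bool
  | white _ => false
  | black _ _ => true

/-- The marked letters of a block, from right to left. -/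
def letters : MarkedBlock → List MarkedLetter
  | white m => [(false, m)]
  | black m₁ m₂ => [(true, m₁), (true, m₂)]

/-- The piece of an L-lattice path encoding a marked block: the pieces are the words `H Dᵏ` and
`L Dᵏ` with `k ≤ 2`, and each rises by as much as the letters of its block. -/
def steps : MarkedBlock → List LStep
  | white false => [.H, .D]
  | white true => [.H, .D, .D]
  | black false false => [.L, .D, .D]
  | black false true => [.H]
  | black true false => [.L, .D]
  | black true true => [.L]

theorem flatMap_letters_injective :
    Function.Injective fun l : List MarkedBlock => l.flatMap letters := by
  refine flatMap_injective_of_suffix_free ?_ ?_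
  · rintro (_ | _) <;> simp [letters]
  · rintro (_ | _) (_ | _) h <;> simp_all [letters, List.suffix_cons_iff]

theorem flatMap_steps_injective :
    Function.Injective fun l : List MarkedBlock => l.flatMap steps := by
  refine flatMap_injective_of_suffix_free ?_ ?_
  · rintro ((_ | _) | ⟨_ | _, _ | _⟩) <;> simp [steps]
  · rintro ((_ | _) | ⟨_ | _, _ | _⟩) ((_ | _) | ⟨_ | _, _ | _⟩) h <;>
      simp_all [steps, List.suffix_cons_iff]

theorem map_fst_flatMap_letters (l : List MarkedBlock) :
    (l.flatMap letters).map Prod.fst =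
      (l.map color).flatMap fun b => if b then List.replicate 2 true else [false] := by
  induction l with
  | nil => rfl
  | cons b l ih => cases b <;> simpa [letters, color] using ih

theorem exists_flatMap_letters_eq {c : List Bool} {x : List MarkedLetter}
    (hx : x.map Prod.fst = c.flatMap fun b => if b then List.replicate 2 true else [false]) :
    ∃ l : List MarkedBlock, l.map color = c ∧ l.flatMap letters = x := by
  refine exists_flatMap_eq_of_map_eq_flatMap (fun b y hy => ?_) hx
  cases b
  · obtain ⟨⟨_, m⟩, rfl, rfl⟩ := List.map_eq_singleton_iff.1 hy
    exact ⟨white m, rfl, rfl⟩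
  · obtain ⟨⟨_, m₁⟩, z, rfl, rfl, hz⟩ := List.map_eq_cons_iff.1 hy
    obtain ⟨⟨_, m₂⟩, rfl, rfl⟩ := List.map_eq_singleton_iff.1 hz
    exact ⟨black m₁ m₂, rfl, rfl⟩

theorem isExcursion_flatMap_steps {l : List MarkedBlock} {h : ℤ} :
    IsExcursion (fun s => s.move.2) h (l.flatMap steps) ↔
      IsExcursion MarkedLetter.rise h (l.flatMap letters) := by
  induction l generalizing h with
  | nil => simp
  | cons b l ih =>
    have move_snd : LStep.H.move.2 = 1 ∧ LStep.D.move.2 = -1 ∧ LStep.L.move.2 = 2 :=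
      ⟨rfl, rfl, rfl⟩
    rcases b with (_ | _) | ⟨_ | _, _ | _⟩ <;>
      simp only [List.flatMap_cons, steps, letters, List.cons_append, List.nil_append,
        isExcursion_cons, ih, move_snd, MarkedLetter.rise] <;>
      grind [IsExcursion.nonneg]

theorem sum_move_flatMap_steps (l : List MarkedBlock) :
    (((l.flatMap steps).map LStep.move).sum).1 + (((l.flatMap steps).map LStep.move).sum).2 =
      3 * l.length := by
  induction l with
  | nil => rfl
  | cons b l ih =>
    have hb : ((b.steps.map LStep.move).sum).1 + ((b.steps.map LStep.move).sum).2 = 3 := by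
      rcases b with (_ | _) | ⟨_ | _, _ | _⟩ <;> rfl
    simp only [List.flatMap_cons, List.map_append, List.sum_append, Prod.fst_add, Prod.snd_add,
      List.length_cons]
    push_cast
    linarith

theorem not_D_cons_prefix_flatMap_steps (l : List MarkedBlock) (p : List LStep) :
    ¬ .D :: p <+: l.flatMap steps := by
  rcases l with _ | ⟨(_ | _) | ⟨_ | _, _ | _⟩, l⟩ <;> simp [steps]

theorem not_DDD_infix_flatMap_steps (l : List MarkedBlock) :
    ¬ [.D, .D, .D] <:+: l.flatMap steps := by
  induction l with
  | nil => simp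
  | cons b l ih =>
    rcases b with (_ | _) | ⟨_ | _, _ | _⟩ <;>
      simp [steps, List.infix_cons_iff, ih, not_D_cons_prefix_flatMap_steps]

theorem exists_replicate_append_flatMap_steps {p : List LStep} (hp : ¬ [.D, .D, .D] <:+: p) :
    ∃ k < 3, ∃ l : List MarkedBlock, p = List.replicate k .D ++ l.flatMap steps := by
  induction p with
  | nil => exact ⟨0, by simp, [], rfl⟩
  | cons a p ih =>
    obtain ⟨k, hk, l, rfl⟩ := ih fun h => hp (List.infix_cons h)
    cases a
    · refine ⟨0, by simp, ?_⟩
      interval_cases k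
      · exact ⟨black false true :: l, rfl⟩
      · exact ⟨white false :: l, rfl⟩
      · exact ⟨white true :: l, rfl⟩
    · refine ⟨k + 1, ?_, l, rfl⟩
      by_contra hk'
      obtain rfl : k = 2 := by omega
      exact hp ⟨[], l.flatMap steps, rfl⟩
    · refine ⟨0, by simp, ?_⟩
      interval_cases k
      · exact ⟨black true true :: l, rfl⟩
      · exact ⟨black true false :: l, rfl⟩
      · exact ⟨black false false :: l, rfl⟩

theorem occCount_HDD_flatMap_steps (l : List MarkedBlock) :
    occCount [.H, .D, .D] (l.flatMap steps) = (l.flatMap letters).count (false, true) := by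
  induction l with
  | nil => rfl
  | cons b l ih =>
    rcases b with (_ | _) | ⟨_ | _, _ | _⟩ <;>
      simp [steps, letters, occCount_cons, ih, not_D_cons_prefix_flatMap_steps, add_comm]

theorem occCount_HD_flatMap_steps (l : List MarkedBlock) :
    occCount [.H, .D] (l.flatMap steps) = (l.map color).count false := by
  induction l with
  | nil => rfl
  | cons b l ih =>
    rcases b with (_ | _) | ⟨_ | _, _ | _⟩ <;>
      simp [steps, color, occCount_cons, ih, not_D_cons_prefix_flatMap_steps, add_comm]

theorem inPn_flatMap_steps {n : ℕ} {l : List MarkedBlock} :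
    InPn n (l.flatMap steps) ↔
      l.length = n ∧ IsExcursion MarkedLetter.rise 0 (l.flatMap letters) := by
  have sum_snd (q : List LStep) : ((q.map LStep.move).sum).2 = (q.map fun s => s.move.2).sum := by
    simpa [Function.comp_def] using map_list_sum (AddMonoidHom.snd ℤ ℤ) (q.map LStep.move)
  have hsum := sum_move_flatMap_steps l
  rw [← isExcursion_flatMap_steps]
  simp only [IsExcursion, InPn, Prod.ext_iff, zero_add, ← sum_snd, not_DDD_infix_flatMap_steps,
    not_false_eq_true, and_true]
  constructor
  · rintro ⟨⟨hx, hy⟩, nonneg⟩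
    exact ⟨by omega, nonneg, hy⟩
  · rintro ⟨rfl, nonneg, hy⟩
    exact ⟨⟨by omega, hy⟩, nonneg⟩

end MarkedBlock

open MarkedBlock

/-- The common encoding of both sides: sequences of `n` marked blocks, read from right to left, with
`i` white blocks and `j` edges, each edge being counted at its white end. -/
abbrev MarkedBlockSeq (n i j : ℕ) : Type :=
  {l : List MarkedBlock // l.length = n ∧ IsExcursion MarkedLetter.rise 0 (l.flatMap letters) ∧
    (l.flatMap letters).count (false, true) = j ∧ (l.map color).count false = i}

theorem card_markedBlockSeq_eq_card_paths (n i j : ℕ) :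
    Nat.card (MarkedBlockSeq n i j) = Nat.card {p : List LStep // InPn n p ∧
      occCount [.H, .D, .D] p = j ∧ occCount [.H, .D] p = i} := by
  refine Nat.card_eq_of_bijective (fun l => ⟨l.1.flatMap steps, ?_⟩) ⟨fun l l' h => ?_, ?_⟩
  · rw [inPn_flatMap_steps, occCount_HDD_flatMap_steps, occCount_HD_flatMap_steps]
    exact ⟨⟨l.2.1, l.2.2.1⟩, l.2.2.2⟩
  · exact Subtype.ext (flatMap_steps_injective (Subtype.ext_iff.1 h))
  · rintro ⟨p, hp, hj, hi⟩
    obtain ⟨k, -, l, rfl⟩ := exists_replicate_append_flatMap_steps hp.2.2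
    obtain rfl : k = 0 := by
      rcases k with _ | k
      · rfl
      · have := hp.2.1 [.D] (by simp [List.replicate_succ])
        simp [LStep.move] at this
    rw [List.replicate_zero, List.nil_append] at hp hj hi
    obtain ⟨hn, hl⟩ := inPn_flatMap_steps.1 hp
    rw [occCount_HDD_flatMap_steps] at hj
    rw [occCount_HD_flatMap_steps] at hi
    exact ⟨⟨l, hn, hl, hj, hi⟩, rfl⟩

theorem reverse_wordChoiceAS (s : ℕ) {n : ℕ} (c : Fin n → Bool) :
    (wordChoiceAS s c).reverse =
      (List.ofFn c).reverse.flatMap fun b => if b then List.replicate s true else [false] := by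
  rw [wordChoiceAS, List.reverse_flatMap]
  congr! 2 with b
  cases b <;> simp

/-- The marked blocks `l`, read from right to left, encode the choice `c` and the noncrossing
contraction `E` of its word. -/
def Encodes {n : ℕ} (l : List MarkedBlock) (c : Fin n → Bool) (E : Finset (ℕ × ℕ)) : Prop :=
  l.map color = (List.ofFn c).reverse ∧ StackMatching (l.flatMap letters) E []

namespace Encodes

variable {n : ℕ} {l l' : List MarkedBlock} {c c' : Fin n → Bool} {E E' : Finset (ℕ × ℕ)}

theorem map_fst_flatMap_letters (h : Encodes l c E) :
    (l.flatMap letters).map Prod.fst = (wordChoiceAS 2 c).reverse := by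
  rw [MarkedBlock.map_fst_flatMap_letters, h.1, reverse_wordChoiceAS]

theorem partialContraction (h : Encodes l c E) : PartialContraction (wordChoiceAS 2 c) E [] := by
  simpa [h.map_fst_flatMap_letters] using h.2.partialContraction

theorem length_eq (h : Encodes l c E) : l.length = n := by
  simpa using congrArg List.length h.1

theorem isExcursion (h : Encodes l c E) : IsExcursion MarkedLetter.rise 0 (l.flatMap letters) :=
  h.2.isExcursion

theorem count_letters (h : Encodes l c E) : (l.flatMap letters).count (false, true) = E.card :=
  h.2.card_add_length.symm

theorem count_color (h : Encodes l c E) (b : Bool) :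
    (l.map color).count b = (Finset.univ.filter fun k => c k = b).card := by
  rw [h.1, List.count_reverse, count_ofFn]

theorem left_unique (h : Encodes l c E) (h' : Encodes l' c E) : l = l' :=
  flatMap_letters_injective <| h.2.left_unique h'.2 <|
    h.map_fst_flatMap_letters.trans h'.map_fst_flatMap_letters.symm

theorem right_unique (h : Encodes l c E) (h' : Encodes l c' E') : c = c' ∧ E = E' :=
  ⟨List.ofFn_injective (List.reverse_injective (h.1.symm.trans h'.1)), (h.2.right_unique h'.2).1⟩

end Encodes

theorem PartialContraction.exists_encodes {n : ℕ} {c : Fin n → Bool} {E : Finset (ℕ × ℕ)}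
    (h : PartialContraction (wordChoiceAS 2 c) E []) : ∃ l, Encodes l c E := by
  rw [← List.reverse_reverse (wordChoiceAS 2 c)] at h
  obtain ⟨x, hx, hxE⟩ := h.exists_stackMatching
  rw [reverse_wordChoiceAS] at hx
  obtain ⟨l, hl, rfl⟩ := exists_flatMap_letters_eq hx
  exact ⟨l, hl, hxE⟩

theorem IsExcursion.exists_encodes {l : List MarkedBlock}
    (h : IsExcursion MarkedLetter.rise 0 (l.flatMap letters)) :
    ∃ (c : Fin l.length → Bool) (E : Finset (ℕ × ℕ)), Encodes l c E := by
  obtain ⟨E, P, hEP, hP⟩ := h.exists_stackMatching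
  obtain rfl : P = [] := List.length_eq_zero_iff.1 (by exact_mod_cast hP)
  exact ⟨fun k => l[k.rev].color, E, List.ext_getElem (by simp) (by grind), hEP⟩

theorem pairCountAS_two_eq_card_markedBlockSeq (n i j : ℕ) :
    pairCountAS 2 n j i = Nat.card (MarkedBlockSeq n i j) := by
  refine card_eq_of_existsUnique
    (fun p l => Encodes l.1 p.1.1 (p.1.2.map (edgeEmbedding _))) ?_ ?_
  · rintro ⟨⟨c, E⟩, hi, hE, hE_nc, hj⟩
    obtain ⟨l, hl⟩ :=
      (partialContraction_map_edgeEmbedding.2 ⟨hE, hE_nc⟩).exists_encodes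
    exact ⟨⟨l, hl.length_eq, hl.isExcursion, by rw [hl.count_letters, Finset.card_map, hj],
      (hl.count_color false).trans hi⟩, hl, fun l' hl' => Subtype.ext (hl'.left_unique hl)⟩
  · rintro ⟨l, rfl, hl, hj, hi⟩
    obtain ⟨c, E, h⟩ := hl.exists_encodes
    have hE := h.partialContraction
    obtain ⟨E, rfl⟩ := exists_map_edgeEmbedding_eq fun e he =>
      ⟨hE.fst_lt_length he, hE.snd_lt_length he⟩
    obtain ⟨hE_contr, hE_nc⟩ := partialContraction_map_edgeEmbedding.1 hE
    refine ⟨⟨⟨c, E⟩, (h.count_color false).symm.trans hi, hE_contr, hE_nc, ?_⟩, h, ?_⟩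
    · rw [← hj, h.count_letters, Finset.card_map]
    · rintro ⟨⟨c', E'⟩, _⟩ h'
      obtain ⟨rfl, hE'⟩ := h'.right_unique h
      obtain rfl := Finset.map_injective _ hE'
      rfl

theorem stmt11 (n i j : ℕ) :
    pairCountAS 2 n j i
      = Nat.card {p : List LStep // InPn n p ∧
          occCount [LStep.H, LStep.D, LStep.D] p = j ∧
          occCount [LStep.H, LStep.D] p = i} := by
  rw [pairCountAS_two_eq_card_markedBlockSeq, card_markedBlockSeq_eq_card_paths]
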